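/- In the two-party, two-election model with presidential win-probability function f and parliamentary win-probability function g, the probability that SOME party (a or b) sweeps both elections is at least as large when the elections are held simultaneously as when they are held separately: Σ_{S ⊆ H} μ_p(S)·[f(S)g(S) + (1−f(S))(1−g(S))] ≥ (Σ_S μ_p(S) f(S))·(Σ_S μ_p(S) g(S)) + (1 − Σ_S μ_p(S) f(S))·(1 − Σ_S μ_p(S) g(S)). -/

import Mathlib

open Finset

/-- Product Bernoulli measure on subsets of `H = Fin m`. -/
def bern {m : ℕ} (p : Fin m → ℝ) (S : Finset (Fin m)) : ℝ :=
  (∏ h ∈ S, p h) * ∏ h ∈ Sᶜ, (1 - p h)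

/-- Presidential win-probability for party `a` (with supporter set `A`) given
turnout `S`: win on a strict majority of cast votes, ties broken by a fair coin. -/
noncomputable def presWin {m : ℕ} (A : Finset (Fin m)) (S : Finset (Fin m)) : ℝ :=
  if (S \ A).card < (S ∩ A).card then 1
  else if (S ∩ A).card = (S \ A).card then 1 / 2 else 0

/-- Probability that party `a` is awarded district `D` given turnout `S`. -/
noncomputable def distWin {m : ℕ} (A D S : Finset (Fin m)) : ℝ :=
  if ((S ∩ D) \ A).card < (S ∩ A ∩ D).card then 1
  else if (S ∩ A ∩ D).card = ((S ∩ D) \ A).card then 1 / 2 else 0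

/-- Probability of winning parliament given `w` districts out of `k`:  a strict
majority of the districts wins, an exact tie is broken by a fair coin. -/
noncomputable def majOf (k w : ℕ) : ℝ :=
  if k < 2 * w then 1 else if 2 * w = k then 1 / 2 else 0

/-- Parliamentary win-probability for party `a` (supporter set `A`, districts `D`)
given turnout `S`: each district is awarded independently with probability
`distWin A (D j) S`, and party `a` wins parliament on a majority of districts. -/
noncomputable def parlWin {m k : ℕ} (A : Finset (Fin m)) (D : Fin k → Finset (Fin m))
    (S : Finset (Fin m)) : ℝ :=
  ∑ W : Finset (Fin k),
    (∏ j ∈ W, distWin A (D j) S) * (∏ j ∈ Wᶜ, (1 - distWin A (D j) S)) * majOf k W.card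

/-- The expectation of `r` at a sum of independent Bernoulli variables is monotone in the
success probabilities, provided `r` is monotone. -/
theorem sum_powerset_bernoulli_mono {ι : Type*} [DecidableEq ι] (s : Finset ι) {u v : ι → ℝ}
    (hu : ∀ j, 0 ≤ u j) (huv : ∀ j, u j ≤ v j) (hv : ∀ j, v j ≤ 1) {r : ℕ → ℝ}
    (hr : Monotone r) :
    ∑ W ∈ s.powerset, (∏ j ∈ W, u j) * (∏ j ∈ s \ W, (1 - u j)) * r W.card ≤
      ∑ W ∈ s.powerset, (∏ j ∈ W, v j) * (∏ j ∈ s \ W, (1 - v j)) * r W.card := by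
  induction s using Finset.induction_on generalizing r with
  | empty => simp
  | insert a s ha ih =>
    have expand : ∀ w : ι → ℝ,
        ∑ W ∈ (insert a s).powerset,
            (∏ j ∈ W, w j) * (∏ j ∈ insert a s \ W, (1 - w j)) * r W.card =
          (1 - w a) * ∑ W ∈ s.powerset, (∏ j ∈ W, w j) * (∏ j ∈ s \ W, (1 - w j)) * r W.card +
          w a * ∑ W ∈ s.powerset,
            (∏ j ∈ W, w j) * (∏ j ∈ s \ W, (1 - w j)) * r (W.card + 1) := by
      intro w
      rw [Finset.sum_powerset_insert ha, Finset.mul_sum, Finset.mul_sum]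
      congr 1
      · refine Finset.sum_congr rfl fun W hW => ?_
        have haW : a ∉ W := fun h => ha (Finset.mem_powerset.1 hW h)
        rw [Finset.insert_sdiff_of_notMem _ haW, Finset.prod_insert (by simp [ha])]
        ring
      · refine Finset.sum_congr rfl fun W hW => ?_
        have haW : a ∉ W := fun h => ha (Finset.mem_powerset.1 hW h)
        have hsd : insert a s \ insert a W = s \ W := by grind
        rw [hsd, Finset.prod_insert haW, Finset.card_insert_of_notMem haW]
        ring
    rw [expand u, expand v]
    have h₀ := ih hr
    have h₁ := ih (r := fun n => r (n + 1)) fun i j hij => hr (Nat.add_le_add_right hij 1)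
    have step : ∑ W ∈ s.powerset, (∏ j ∈ W, v j) * (∏ j ∈ s \ W, (1 - v j)) * r W.card ≤
        ∑ W ∈ s.powerset, (∏ j ∈ W, v j) * (∏ j ∈ s \ W, (1 - v j)) * r (W.card + 1) :=
      Finset.sum_le_sum fun W _ => mul_le_mul_of_nonneg_left (hr (Nat.le_succ _)) <|
        mul_nonneg (Finset.prod_nonneg fun j _ => (hu j).trans (huv j))
          (Finset.prod_nonneg fun j _ => sub_nonneg.2 (hv j))
    have hua := hu a
    have huva := huv a
    have hua' : 0 ≤ 1 - u a := by linarith [hv a]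
    have k₀ := mul_le_mul_of_nonneg_left h₀ hua'
    have k₁ := mul_le_mul_of_nonneg_left h₁ hua
    have k₂ := mul_le_mul_of_nonneg_left step (sub_nonneg.2 huva)
    linarith

theorem majOf_nonneg (k w : ℕ) : 0 ≤ majOf k w := by
  unfold majOf; split_ifs <;> norm_num

theorem majOf_mono (k : ℕ) : Monotone (majOf k) := by
  intro w w' h
  unfold majOf
  split_ifs <;> first | omega | norm_num

section Turnout

variable {m k : ℕ}

theorem presWin_nonneg (A S : Finset (Fin m)) : 0 ≤ presWin A S := by
  unfold presWin; split_ifs <;> norm_num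

theorem distWin_nonneg (A D S : Finset (Fin m)) : 0 ≤ distWin A D S := by
  unfold distWin; split_ifs <;> norm_num

theorem distWin_le_one (A D S : Finset (Fin m)) : distWin A D S ≤ 1 := by
  unfold distWin; split_ifs <;> norm_num

theorem presWin_le_presWin {A S T : Finset (Fin m)} (hA : S ∩ A ⊆ T ∩ A) (hB : T \ A ⊆ S \ A) :
    presWin A S ≤ presWin A T := by
  have h₁ := Finset.card_le_card hA
  have h₂ := Finset.card_le_card hB
  unfold presWin
  split_ifs <;> first | omega | norm_num

theorem distWin_le_distWin {A S T : Finset (Fin m)} (D : Finset (Fin m))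
    (hA : S ∩ A ⊆ T ∩ A) (hB : T \ A ⊆ S \ A) : distWin A D S ≤ distWin A D T := by
  have h₁ : (S ∩ A ∩ D).card ≤ (T ∩ A ∩ D).card :=
    Finset.card_le_card (Finset.inter_subset_inter_right hA)
  have h₂ : ((T ∩ D) \ A).card ≤ ((S ∩ D) \ A).card := by
    refine Finset.card_le_card fun h hh => ?_
    have := @hB h
    simp only [Finset.mem_inter, Finset.mem_sdiff] at this hh ⊢
    tauto
  unfold distWin
  split_ifs <;> first | omega | norm_num

theorem parlWin_nonneg (A : Finset (Fin m)) (D : Fin k → Finset (Fin m)) (S : Finset (Fin m)) :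
    0 ≤ parlWin A D S :=
  Finset.sum_nonneg fun W _ => mul_nonneg
    (mul_nonneg (Finset.prod_nonneg fun j _ => distWin_nonneg A (D j) S)
      (Finset.prod_nonneg fun j _ => sub_nonneg.2 (distWin_le_one A (D j) S)))
    (majOf_nonneg k W.card)

theorem parlWin_le_parlWin {A S T : Finset (Fin m)} (D : Fin k → Finset (Fin m))
    (hA : S ∩ A ⊆ T ∩ A) (hB : T \ A ⊆ S \ A) : parlWin A D S ≤ parlWin A D T := by
  have h := sum_powerset_bernoulli_mono (Finset.univ : Finset (Fin k))
    (fun j => distWin_nonneg A (D j) S) (fun j => distWin_le_distWin (D j) hA hB)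
    (fun j => distWin_le_one A (D j) T) (majOf_mono k)
  simpa only [parlWin, Finset.powerset_univ, ← Finset.compl_eq_univ_sdiff] using h

theorem bern_eq_prod_ite (p : Fin m → ℝ) (S : Finset (Fin m)) :
    bern p S = ∏ h, if h ∈ S then p h else 1 - p h := by
  rw [bern, ← Finset.prod_mul_prod_compl S]
  congr 1
  · exact Finset.prod_congr rfl fun h hS => (if_pos hS).symm
  · exact Finset.prod_congr rfl fun h hS => (if_neg (Finset.mem_compl.1 hS)).symm

theorem bern_nonneg {p : Fin m → ℝ} (hp : ∀ h, 0 ≤ p h ∧ p h ≤ 1) (S : Finset (Fin m)) :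
    0 ≤ bern p S :=
  mul_nonneg (Finset.prod_nonneg fun h _ => (hp h).1)
    (Finset.prod_nonneg fun h _ => sub_nonneg.2 (hp h).2)

theorem sum_bern (p : Fin m → ℝ) : ∑ S : Finset (Fin m), bern p S = 1 := by
  have h := Finset.prod_add p (fun h => 1 - p h) Finset.univ
  simp only [add_sub_cancel, Finset.prod_const_one, Finset.powerset_univ,
    ← Finset.compl_eq_univ_sdiff] at h
  exact h.symm

/-- After flipping the coordinates in any fixed set, the product Bernoulli measure is
log-modular. -/
theorem bern_symmDiff_mul_bern_symmDiff (p : Fin m → ℝ) (B S T : Finset (Fin m)) :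
    bern p (symmDiff S B) * bern p (symmDiff T B) =
      bern p (symmDiff (S ⊓ T) B) * bern p (symmDiff (S ⊔ T) B) := by
  simp only [bern_eq_prod_ite, ← Finset.prod_mul_distrib]
  refine Finset.prod_congr rfl fun h _ => ?_
  by_cases hS : h ∈ S <;> by_cases hT : h ∈ T <;> by_cases hB : h ∈ B <;>
    simp [Finset.mem_symmDiff, hS, hT, hB, mul_comm]

/-- Harris' inequality for functions which increase in the turnout inside `A` and decrease in
the turnout outside `A`. -/
theorem bern_positive_association {p : Fin m → ℝ} (hp : ∀ h, 0 ≤ p h ∧ p h ≤ 1)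
    (A : Finset (Fin m)) {f g : Finset (Fin m) → ℝ} (hf₀ : ∀ S, 0 ≤ f S) (hg₀ : ∀ S, 0 ≤ g S)
    (hf : ∀ S T, S ∩ A ⊆ T ∩ A → T \ A ⊆ S \ A → f S ≤ f T)
    (hg : ∀ S T, S ∩ A ⊆ T ∩ A → T \ A ⊆ S \ A → g S ≤ g T) :
    (∑ S, bern p S * f S) * (∑ S, bern p S * g S) ≤ ∑ S, bern p S * (f S * g S) := by
  have flip_sum (F : Finset (Fin m) → ℝ) : ∑ S, F (symmDiff S Aᶜ) = ∑ S, F S :=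
    Equiv.sum_comp (Function.Involutive.toPerm (fun S : Finset (Fin m) => symmDiff S Aᶜ)
      fun S => symmDiff_symmDiff_cancel_right _ S) F
  have flip_mono {F : Finset (Fin m) → ℝ}
      (hF : ∀ S T, S ∩ A ⊆ T ∩ A → T \ A ⊆ S \ A → F S ≤ F T) :
      Monotone fun S => F (symmDiff S Aᶜ) := by
    intro S T hST
    apply hF <;> intro h hh <;> have := @hST h <;>
      simp only [Finset.mem_inter, Finset.mem_sdiff, Finset.mem_symmDiff,
        Finset.mem_compl] at hh ⊢ <;> tauto
  have key := fkg (μ := fun S => bern p (symmDiff S Aᶜ)) (f := fun S => f (symmDiff S Aᶜ))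
    (g := fun S => g (symmDiff S Aᶜ)) (fun S => bern_nonneg hp (symmDiff S Aᶜ)) (fun S => hf₀ (symmDiff S Aᶜ))
    (fun S => hg₀ (symmDiff S Aᶜ)) (flip_mono hf) (flip_mono hg)
    fun S T => (bern_symmDiff_mul_bern_symmDiff p Aᶜ S T).le
  rwa [flip_sum (fun S => bern p S * f S), flip_sum (fun S => bern p S * g S),
    flip_sum (bern p), flip_sum (fun S => bern p S * (f S * g S)), sum_bern, one_mul] at key

end Turnout

/-- In the two-party, two-election model, the probability that SOME party sweeps both
elections is at least as large when the elections are held simultaneously as when they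
are held on separate dates. -/
theorem simultaneous_some_party_sweep_ge {m k : ℕ} (A : Finset (Fin m))
    (D : Fin k → Finset (Fin m)) (hD : ∀ h : Fin m, ∃! j, h ∈ D j)
    (p : Fin m → ℝ) (hp : ∀ h, 0 ≤ p h ∧ p h ≤ 1) :
    (∑ S : Finset (Fin m), bern p S * presWin A S) *
        (∑ S : Finset (Fin m), bern p S * parlWin A D S) +
      (1 - ∑ S : Finset (Fin m), bern p S * presWin A S) *
        (1 - ∑ S : Finset (Fin m), bern p S * parlWin A D S) ≤
    ∑ S : Finset (Fin m), bern p S *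
      (presWin A S * parlWin A D S + (1 - presWin A S) * (1 - parlWin A D S)) := by
  have key := bern_positive_association hp A (presWin_nonneg A) (parlWin_nonneg A D)
    (fun S T => presWin_le_presWin) (fun S T => parlWin_le_parlWin D)
  have expand : ∑ S : Finset (Fin m), bern p S *
      (presWin A S * parlWin A D S + (1 - presWin A S) * (1 - parlWin A D S)) =
      2 * ∑ S, bern p S * (presWin A S * parlWin A D S) - ∑ S, bern p S * presWin A S -
        ∑ S, bern p S * parlWin A D S + ∑ S, bern p S := by
    rw [Finset.mul_sum, ← Finset.sum_sub_distrib, ← Finset.sum_sub_distrib,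
      ← Finset.sum_add_distrib]
    exact Finset.sum_congr rfl fun S _ => by ring
  rw [expand, sum_bern]
  linarith
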